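/- For all integers d ≥ 1 and n ≥ 1, the space ℝ^d(n) is an absolute Lipschitz retract: for every metric space Y and every isometric embedding ι : ℝ^d(n) → Y, there exists a constant L and an L-Lipschitz map r : Y → ℝ^d(n) such that r(ι(S)) = S for every S ∈ ℝ^d(n). -/

import Mathlib

/-! Let `Z` be a complete doubling metric space in which every ball contracts to a point by a
homotopy whose Lipschitz constants scale with the radius. For `Z ⊆ Y` isometrically, cover `Y \ Z`
by Whitney pieces, of size comparable to their distance to `Z`. Doubling lets finitely many colours
suffice to make pieces of the same colour far apart. Start from any map `Y → Z` that moves points by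
at most twice their distance to `Z`, and make it Lipschitz one colour at a time: on each piece of
the current colour run the contraction of a ball of comparable size, up to a time given by a cutoff
function. The values are constant at time `0`, away from the pieces treated before, and unchanged
at time `1`, well inside those pieces; in between the map is already Lipschitz.

The space `E(n)` satisfies the hypotheses for every finite-dimensional `E`. Its ball of radius `r`
around `S` is contracted by grouping `S` into clusters with gaps larger than `3 * r`, and moving
each point of a set in the ball linearly to a chosen point of the nearby cluster. -/

open Metric Set
open scoped NNReal unitInterval

/-! ### Doubling spaces and coloured nets -/

/-- A metric space is doubling if each ball of radius `R * r` is covered by a number of balls of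
radius `r` that depends only on `R`. (The case `R = 2` gives the others by iteration.) -/
def IsDoubling (X : Type*) [PseudoMetricSpace X] : Prop :=
  ∀ R : ℝ≥0, ∃ N : ℕ, ∀ (x : X) (r : ℝ≥0), 0 < r →
    ∃ t : Finset X, t.card ≤ N ∧ IsCover r (closedBall x (R * r)) (t : Set X)

lemma exists_isSeparated_isCover_univ (X : Type*) [PseudoEMetricSpace X] (ε : ℝ≥0) :
    ∃ P : Set X, IsSeparated ε P ∧ IsCover ε univ P := by
  obtain ⟨P, hP⟩ := zorn_subset {P : Set X | P ⊆ univ ∧ IsSeparated ε P}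
    fun c hc hchain ↦ ⟨⋃₀ c, ⟨subset_univ _, (pairwise_sUnion hchain.directedOn).2
      fun s hs ↦ (hc hs).2⟩, fun s hs ↦ subset_sUnion_of_mem hs⟩
  exact ⟨P, hP.prop.2, .of_maximal_isSeparated hP⟩

lemma IsDoubling.exists_encard_le {X : Type*} [PseudoMetricSpace X] (hX : IsDoubling X)
    (R : ℝ≥0) : ∃ N : ℕ, ∀ (x : X) (r : ℝ≥0), 0 < r →
      ∀ s ⊆ closedBall x (R * r), IsSeparated r s → s.encard ≤ N := by
  obtain ⟨N, hN⟩ := hX (2 * R)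
  refine ⟨N, fun x r hr s hs hsep ↦ ?_⟩
  obtain ⟨t, ht, hcov⟩ := hN x (r / 2) (half_pos hr)
  have hball : ((2 * R : ℝ≥0) : ℝ) * (r / 2 : ℝ≥0) = R * r := by push_cast; ring
  rw [hball] at hcov
  have htwo : 2 * (r / 2) = r := mul_div_cancel₀ r two_ne_zero
  calc s.encard ≤ packingNumber r (closedBall x (R * r)) := hsep.encard_le_packingNumber hs
    _ = packingNumber (2 * (r / 2)) (closedBall x (R * r)) := by rw [htwo]
    _ ≤ externalCoveringNumber (r / 2) (closedBall x (R * r)) :=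
      packingNumber_two_mul_le_externalCoveringNumber ..
    _ ≤ (t : Set X).encard := hcov.externalCoveringNumber_le_encard
    _ ≤ N := by rw [encard_coe_eq_coe_finsetCard]; exact_mod_cast ht

lemma exists_fin_notMem_of_encard_le {N : ℕ} {s : Set (Fin (N + 1))} (hs : s.encard ≤ N) :
    ∃ i, i ∉ s := by
  by_contra! h
  rw [eq_univ_of_forall h, encard_univ, ENat.card_eq_coe_fintype_card, Fintype.card_fin] at hs
  exact absurd hs (by exact_mod_cast N.lt_succ_self.not_ge)

lemma colorable_of_encard_neighborSet_le {V : Type*} (G : SimpleGraph V) (N : ℕ)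
    (hG : ∀ v, (G.neighborSet v).encard ≤ N) : G.Colorable (N + 1) := by
  let usedColors (v : V) (color : ∀ w, WellOrderingRel w v → Fin (N + 1)) : Set (Fin (N + 1)) :=
    {i | ∃ w, ∃ h : WellOrderingRel w v, G.Adj v w ∧ color w h = i}
  have exists_free (v color) : ∃ i, i ∉ usedColors v color := by
    refine exists_fin_notMem_of_encard_le <| le_trans ?_ (hG v)
    classical
    refine (encard_le_encard ?_).trans
      (encard_image_le (fun w ↦ if h : WellOrderingRel w v then color w h else 0) _)
    rintro _ ⟨w, h, hadj, rfl⟩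
    exact ⟨w, hadj, dif_pos h⟩
  choose free hfree using exists_free
  let greedy : V → Fin (N + 1) := IsWellFounded.fix WellOrderingRel free
  have greedy_ne {v w : V} (h : WellOrderingRel w v) (hadj : G.Adj v w) : greedy v ≠ greedy w := by
    intro heq
    exact hfree v (fun w _ ↦ greedy w)
      ⟨w, h, hadj, heq.symm.trans (IsWellFounded.fix_eq WellOrderingRel free v)⟩
  refine ⟨.mk greedy fun {v w} hadj ↦ ?_⟩
  rcases trichotomous_of WellOrderingRel v w with h | rfl | h
  · exact (greedy_ne h hadj.symm).symm
  · exact (G.irrefl hadj).elim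
  · exact greedy_ne h hadj

lemma IsDoubling.exists_colored_net {X : Type*} [PseudoMetricSpace X] (hX : IsDoubling X)
    (R : ℝ≥0) : ∃ m : ℕ, ∀ r : ℝ≥0, 0 < r → ∃ (P : Set X) (color : P → Fin m),
      (∀ x : X, ∃ p : P, dist x p ≤ r) ∧
        ∀ p q : P, color p = color q → dist p q ≤ R * r → p = q := by
  obtain ⟨N, hN⟩ := hX.exists_encard_le R
  refine ⟨N + 1, fun r hr ↦ ?_⟩
  obtain ⟨P, hsep, hcov⟩ := exists_isSeparated_isCover_univ X r
  let G : SimpleGraph P := .fromRel fun p q ↦ dist p q ≤ R * r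
  have hG (p : P) : (G.neighborSet p).encard ≤ N := by
    rw [← Subtype.val_injective.encard_image]
    refine hN p r hr _ ?_ (hsep.subset (image_subset_iff.2 fun q _ ↦ q.2))
    rintro _ ⟨q, ⟨-, hq | hq⟩, rfl⟩
    · rwa [mem_closedBall, dist_comm]
    · exact hq
  obtain ⟨color⟩ := colorable_of_encard_neighborSet_le G N hG
  refine ⟨P, color, fun x ↦ ?_, fun p q hcolor hdist ↦ ?_⟩
  · obtain ⟨p, hp, hxp⟩ := hcov (mem_univ x)
    exact ⟨⟨p, hp⟩, edist_le_coe.1 hxp⟩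
  · by_contra hne
    exact color.valid (SimpleGraph.fromRel_adj .. |>.2 ⟨hne, .inl hdist⟩) hcolor

/-! ### Functions that are Lipschitz relative to the scale -/

section ScaledLipschitz

variable {X Y : Type*} [PseudoMetricSpace X] [PseudoMetricSpace Y] {δ : Y → ℝ} {K : ℝ≥0}

/-- Two points are near if their distance is less than `η` times the value of `δ` at either one,
where `δ` stands for the distance to a fixed subset. In particular `δ` is positive at both. -/
def Near (δ : Y → ℝ) (η : ℝ) (y y' : Y) : Prop :=
  dist y y' < η * δ y ∧ dist y y' < η * δ y'

/-- `φ` has Lipschitz constant of order `K / δ`: the regularity of the functions in a partition of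
unity subordinate to a Whitney cover, where `δ` is the distance to the set that is left out. -/
def ScaledLipschitz (δ : Y → ℝ) (K : ℝ≥0) (φ : Y → X) : Prop :=
  ∀ y y', dist (φ y) (φ y') * min (δ y) (δ y') ≤ K * dist y y'

lemma Near.symm {η : ℝ} {y y' : Y} (h : Near δ η y y') : Near δ η y' y := by
  unfold Near
  rw [dist_comm]
  exact And.symm h

lemma Near.mono {η η' : ℝ} (hη : η ≤ η') (hδ : ∀ y, 0 ≤ δ y) {y y' : Y} (h : Near δ η y y') :
    Near δ η' y y' :=
  ⟨h.1.trans_le (mul_le_mul_of_nonneg_right hη (hδ y)),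
    h.2.trans_le (mul_le_mul_of_nonneg_right hη (hδ y'))⟩

lemma Near.refl_left {η : ℝ} {y y' : Y} (h : Near δ η y y') : Near δ η y y := by
  have := dist_nonneg.trans_lt h.1
  simpa [Near] using this

lemma Near.apply_le (hδ : LipschitzWith 1 δ) {η : ℝ} {y y' : Y} (h : Near δ η y y') :
    δ y' ≤ (1 + η) * δ y := by
  have := hδ.le_add_mul y' y
  rw [NNReal.coe_one, one_mul, dist_comm] at this
  linarith [h.1]

lemma ScaledLipschitz.dist_mul_le {φ : Y → X} (hφ : ScaledLipschitz δ K φ) {ρ : ℝ} {y y' : Y}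
    (hy : ρ ≤ δ y) (hy' : ρ ≤ δ y') : dist (φ y) (φ y') * ρ ≤ K * dist y y' :=
  (mul_le_mul_of_nonneg_left (le_min hy hy') dist_nonneg).trans (hφ y y')

lemma ScaledLipschitz.lipschitz_comp {W : Type*} [PseudoMetricSpace W] {C : ℝ≥0} {g : X → W}
    {φ : Y → X} (hφ : ScaledLipschitz δ K φ) (hg : LipschitzWith C g) :
    ScaledLipschitz δ (C * K) (g ∘ φ) := by
  intro y y'
  rcases le_total (min (δ y) (δ y')) 0 with hδ | hδ
  · exact (mul_nonpos_of_nonneg_of_nonpos dist_nonneg hδ).trans (by positivity)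
  calc dist (g (φ y)) (g (φ y')) * min (δ y) (δ y')
      ≤ C * dist (φ y) (φ y') * min (δ y) (δ y') := by gcongr; exact hg.dist_le_mul ..
    _ = C * (dist (φ y) (φ y') * min (δ y) (δ y')) := mul_assoc ..
    _ ≤ C * (K * dist y y') := mul_le_mul_of_nonneg_left (hφ y y') C.2
    _ = (C * K : ℝ≥0) * dist y y' := by push_cast; ring

lemma scaledLipschitz_iSup {J : Type*} {φ : J → Y → ℝ} (hφ : ∀ j, ScaledLipschitz δ K (φ j))
    (hIcc : ∀ j y, φ j y ∈ Icc (0 : ℝ) 1) : ScaledLipschitz δ K fun y ↦ ⨆ j, φ j y := by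
  intro y y'
  rcases le_or_gt (min (δ y) (δ y')) 0 with hδ | hδ
  · exact (mul_nonpos_of_nonneg_of_nonpos dist_nonneg hδ).trans (by positivity)
  have hbdd (y) : BddAbove (range fun j ↦ φ j y) := ⟨1, by rintro _ ⟨j, rfl⟩; exact (hIcc j y).2⟩
  set d := K * dist y y' / min (δ y) (δ y') with hd
  have hφd (j) : |φ j y - φ j y'| ≤ d := (le_div_iff₀ hδ).2 (hφ j y y')
  have hsup {y y'} (h : ∀ j, φ j y ≤ φ j y' + d) : ⨆ j, φ j y ≤ (⨆ j, φ j y') + d :=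
    Real.iSup_le (fun j ↦ (h j).trans (add_le_add_left (le_ciSup (hbdd y') j) d))
      (add_nonneg (Real.iSup_nonneg fun j ↦ (hIcc j y').1) (by positivity))
  rw [Real.dist_eq, ← le_div_iff₀ hδ, ← hd, abs_sub_le_iff]
  exact ⟨sub_le_iff_le_add'.2 (hsup fun j ↦ sub_le_iff_le_add'.1 (abs_sub_le_iff.1 (hφd j)).1),
    sub_le_iff_le_add'.2 (hsup fun j ↦ sub_le_iff_le_add'.1 (abs_sub_le_iff.1 (hφd j)).2)⟩

end ScaledLipschitz

/-! ### Whitney covers -/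

universe u

section WhitneyCover

variable {Z : Type u} {Y : Type*} [PseudoMetricSpace Y] {ι : Z → Y} {δ : Y → ℝ}
  {J κ : Type*}

/-- A coloured Whitney cover of `{y | 0 < δ y}`, where `δ y` is comparable to the distance from `y`
to the range of `ι`. The pieces are the sets where the functions `bump j` are positive; the piece
`j` has diameter comparable to `radius j` and its distance to `center j` is of the same order.
Pieces of the same colour are far apart relative to their size. -/
structure WhitneyCover (ι : Z → Y) (δ : Y → ℝ) (J κ : Type*) where
  color : J → κ
  center : J → Z
  radius : J → ℝ
  bump : J → Y → ℝ
  radius_pos (j : J) : 0 < radius j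
  bump_mem_Icc (j : J) (y : Y) : bump j y ∈ Icc (0 : ℝ) 1
  scaledLipschitz_bump (j : J) : ScaledLipschitz δ 5 (bump j)
  dist_center_le {j : J} {y : Y} (h : 0 < bump j y) : dist y (ι (center j)) ≤ 6 * radius j
  radius_le {j : J} {y : Y} (h : 0 < bump j y) : radius j ≤ 2 * δ y
  le_radius {j : J} {y : Y} (h : 0 < bump j y) : δ y ≤ 3 * radius j
  eq_of_near {j j' : J} {y y' : Y} (hcolor : color j = color j') (h : 0 < bump j y)
    (h' : 0 < bump j' y') (hnear : Near δ (1 / 10) y y') : j = j'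
  exists_bump_eq_one {y : Y} (hy : 0 < δ y) : ∃ j, bump j y = 1

/-- The height of `y` inside the dyadic Whitney piece of radius `r` around `x`; it is positive
where `dist y x < 11 / 2 * r` and `r / 2 < δ y < 5 / 2 * r`. -/
noncomputable def whitneyHeight (δ : Y → ℝ) (x : Y) (r : ℝ) (y : Y) : ℝ :=
  min (11 / 2 * r - dist y x) (min (δ y - r / 2) (5 / 2 * r - δ y))

/-- The bump function of a dyadic Whitney piece: the height, normalized to take values in
`[0, 1]`. -/
noncomputable def whitneyBump (δ : Y → ℝ) (x : Y) (r : ℝ) (y : Y) : ℝ :=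
  max 0 (min 1 (2 / r * whitneyHeight δ x r y))

lemma lipschitzWith_whitneyHeight (hδ : LipschitzWith 1 δ) (x : Y) (r : ℝ) :
    LipschitzWith 1 (whitneyHeight δ x r) := by
  have hdist : LipschitzWith 1 fun y ↦ 11 / 2 * r - dist y x := by
    simpa using (LipschitzWith.const (11 / 2 * r)).sub (LipschitzWith.dist_left x)
  have hlow : LipschitzWith 1 fun y ↦ δ y - r / 2 := by
    simpa using hδ.sub (LipschitzWith.const (r / 2))
  have hhigh : LipschitzWith 1 fun y ↦ 5 / 2 * r - δ y := by
    simpa using (LipschitzWith.const (5 / 2 * r)).sub hδ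
  have hmin := hdist.min (hlow.min hhigh)
  rwa [max_self, max_self] at hmin

lemma whitneyBump_mem_Icc (δ : Y → ℝ) (x : Y) (r : ℝ) (y : Y) :
    whitneyBump δ x r y ∈ Icc (0 : ℝ) 1 :=
  ⟨le_max_left .., max_le zero_le_one (min_le_left ..)⟩

lemma whitneyBump_pos_iff {x y : Y} {r : ℝ} (hr : 0 < r) :
    0 < whitneyBump δ x r y ↔ dist y x < 11 / 2 * r ∧ r / 2 < δ y ∧ δ y < 5 / 2 * r := by
  have : 0 < 2 / r := by positivity
  simp only [whitneyBump, whitneyHeight, lt_max_iff, lt_self_iff_false, false_or, lt_min_iff,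
    zero_lt_one, true_and, mul_pos_iff_of_pos_left this, sub_pos]

lemma whitneyBump_eq_one {x y : Y} {r : ℝ} (hr : 0 < r) (hx : dist y x ≤ 5 * r) (h : r ≤ δ y)
    (h' : δ y ≤ 2 * r) : whitneyBump δ x r y = 1 := by
  have hheight : r / 2 ≤ whitneyHeight δ x r y :=
    le_min (by linarith) (le_min (by linarith) (by linarith))
  have : 1 ≤ 2 / r * whitneyHeight δ x r y := by
    rw [div_mul_eq_mul_div, one_le_div hr]
    linarith
  rw [whitneyBump, min_eq_left this, max_eq_right zero_le_one]

lemma scaledLipschitz_whitneyBump (hδ : LipschitzWith 1 δ) (x : Y) {r : ℝ} (hr : 0 < r) :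
    ScaledLipschitz δ 5 (whitneyBump δ x r) := by
  intro y y'
  have hlip : dist (whitneyBump δ x r y) (whitneyBump δ x r y') ≤ 2 / r * dist y y' := by
    have hclamp : LipschitzWith 1 fun t : ℝ ↦ max 0 (min 1 t) :=
      (LipschitzWith.id.const_min 1).const_max 0
    calc _ ≤ dist (2 / r * whitneyHeight δ x r y) (2 / r * whitneyHeight δ x r y') :=
          (hclamp.dist_le_mul _ _).trans_eq (one_mul _)
      _ = 2 / r * dist (whitneyHeight δ x r y) (whitneyHeight δ x r y') := by
          rw [Real.dist_eq, Real.dist_eq, ← mul_sub, abs_mul, abs_of_pos (by positivity)]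
      _ ≤ 2 / r * dist y y' := by
          gcongr
          simpa using (lipschitzWith_whitneyHeight hδ x r).dist_le_mul y y'
  by_cases h : min (δ y) (δ y') ≤ 5 / 2 * r
  · calc _ ≤ dist (whitneyBump δ x r y) (whitneyBump δ x r y') * (5 / 2 * r) := by gcongr
      _ ≤ 2 / r * dist y y' * (5 / 2 * r) := by gcongr
      _ = (5 : ℝ≥0) * dist y y' := by push_cast; field
  · obtain ⟨hy, hy'⟩ := lt_min_iff.1 (not_le.1 h)
    have hzero {y} (hy : 5 / 2 * r < δ y) : whitneyBump δ x r y = 0 :=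
      le_antisymm (not_lt.1 fun hpos ↦ hy.not_gt ((whitneyBump_pos_iff hr).1 hpos).2.2)
        (whitneyBump_mem_Icc ..).1
    rw [hzero hy, hzero hy', dist_self, zero_mul]
    positivity

lemma scale_le_of_near {y y' : Y} {k k' : ℤ} (hδ : LipschitzWith 1 δ)
    (hmod : (k : ZMod 3) = k') (hnear : Near δ (1 / 10) y y')
    (h : δ y < 5 / 2 * 2 ^ k) (h' : 2 ^ k' / 2 < δ y') : k' ≤ k := by
  by_contra! hlt
  have hdvd : (3 : ℤ) ∣ k' - k := by
    exact_mod_cast (ZMod.intCast_eq_intCast_iff_dvd_sub k k' 3).1 hmod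
  have hpow : (2 : ℝ) ^ (k + 3) ≤ 2 ^ k' := zpow_le_zpow_right₀ one_le_two (by omega)
  rw [zpow_add₀ two_ne_zero] at hpow
  have : (0 : ℝ) < 2 ^ k := by positivity
  norm_num at hpow
  linarith [hnear.apply_le hδ]

lemma dist_le_of_whitneyBump_pos [PseudoMetricSpace Z] (hι : Isometry ι) {p q : Z} {y y' : Y}
    {r : ℝ} (hr : 0 < r) (h : 0 < whitneyBump δ (ι p) r y) (h' : 0 < whitneyBump δ (ι q) r y')
    (hnear : Near δ (1 / 10) y y') : dist p q ≤ 12 * r := by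
  obtain ⟨hyp, -, hhigh⟩ := (whitneyBump_pos_iff hr).1 h
  calc dist p q = dist (ι p) (ι q) := (hι.dist_eq ..).symm
    _ ≤ dist (ι p) y + dist y y' + dist y' (ι q) := dist_triangle4 ..
    _ ≤ 12 * r := by
        rw [dist_comm (ι p)]
        linarith [hnear.1, ((whitneyBump_pos_iff hr).1 h').1]

theorem IsDoubling.exists_whitneyCover [PseudoMetricSpace Z] (hZ : IsDoubling Z) (hι : Isometry ι)
    (hδ : LipschitzWith 1 δ) (hnearest : ∀ y, ∃ z, dist (ι z) y ≤ 2 * δ y) :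
    ∃ (J : Type u) (m : ℕ), Nonempty (WhitneyCover ι δ J (ZMod 3 × Fin m)) := by
  obtain ⟨m, hm⟩ := hZ.exists_colored_net 12
  choose P color hcover hcolor using fun k : ℤ ↦ hm (2 ^ k) (by positivity)
  have hcolor' (k : ℤ) (p q : P k) (h : color k p = color k q)
      (hdist : dist p q ≤ 12 * 2 ^ k) : p = q := hcolor k p q h (by exact_mod_cast hdist)
  have hpow (k : ℤ) : (0 : ℝ) < 2 ^ k := by positivity
  have hpos {k : ℤ} {x y : Y} := whitneyBump_pos_iff (δ := δ) (x := x) (y := y) (hpow k)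
  -- Scales are coloured modulo 3, so distinct scales of one colour differ by a factor
  -- of at least 8.
  refine ⟨Σ k, P k, m, ⟨{
    color j := (j.1, color j.1 j.2)
    center j := j.2
    radius j := 2 ^ j.1
    bump j := whitneyBump δ (ι j.2) (2 ^ j.1)
    radius_pos j := hpow j.1
    bump_mem_Icc j y := whitneyBump_mem_Icc ..
    scaledLipschitz_bump j := scaledLipschitz_whitneyBump hδ _ (hpow j.1)
    dist_center_le {j y} h := by linarith [hpow j.1, (hpos.1 h).1]
    radius_le {j y} h := by linarith [(hpos.1 h).2.1]
    le_radius {j y} h := by linarith [hpow j.1, (hpos.1 h).2.2]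
    eq_of_near := ?_
    exists_bump_eq_one := ?_ }⟩⟩
  · rintro ⟨k, p⟩ ⟨k', q⟩ y y' hpq h h' hnear
    obtain ⟨-, hlow, hhigh⟩ := hpos.1 h
    obtain ⟨-, hlow', hhigh'⟩ := hpos.1 h'
    obtain ⟨hmod, hpq⟩ := Prod.mk.inj hpq
    obtain rfl : k = k' := le_antisymm (scale_le_of_near hδ hmod.symm hnear.symm hhigh' hlow)
      (scale_le_of_near hδ hmod hnear hhigh hlow')
    congr
    exact hcolor' k p q hpq (dist_le_of_whitneyBump_pos hι (hpow k) h h' hnear)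
  · intro y hy
    obtain ⟨k, hk, hk'⟩ := exists_mem_Ico_zpow hy one_lt_two
    obtain ⟨z, hz⟩ := hnearest y
    obtain ⟨p, hp⟩ := hcover k z
    rw [zpow_add_one₀ two_ne_zero, mul_comm] at hk'
    refine ⟨⟨k, p⟩, whitneyBump_eq_one (hpow k) ?_ hk hk'.le⟩
    calc dist y (ι p) ≤ dist y (ι z) + dist (ι z) (ι p) := dist_triangle ..
      _ = dist (ι z) y + dist z p := by rw [dist_comm, hι.dist_eq]
      _ ≤ 5 * 2 ^ k := by push_cast at hp; linarith

namespace WhitneyCover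

/-- The points deep inside some piece with colour in `S`: some bump function of such a piece
exceeds `a`. -/
def region (W : WhitneyCover ι δ J κ) (S : Set κ) (a : ℝ) : Set Y :=
  {y | ∃ j, W.color j ∈ S ∧ a < W.bump j y}

variable (W : WhitneyCover ι δ J κ)

lemma exists_cutoff (S : Set κ) {a b : ℝ} (ha : 0 ≤ a) (hab : a < b) :
    ∃ (K : ℝ≥0) (s : Y → I), ScaledLipschitz δ K s ∧
      (∀ y ∈ W.region S b, s y = 1) ∧ ∀ y ∉ W.region S a, s y = 0 := by
  let height (y : Y) : ℝ := ⨆ j : {j // W.color j ∈ S}, W.bump j y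
  have hheight : ScaledLipschitz δ 5 height :=
    scaledLipschitz_iSup (fun j ↦ W.scaledLipschitz_bump j) fun j y ↦ W.bump_mem_Icc j y
  have hba : 0 < b - a := sub_pos.2 hab
  have hramp : LipschitzWith (1 / (b - a)).toNNReal fun x : ℝ ↦ (x - a) / (b - a) :=
    LipschitzWith.of_dist_le_mul fun x x' ↦ by
      rw [Real.coe_toNNReal _ (by positivity), Real.dist_eq, Real.dist_eq, ← sub_div,
        sub_sub_sub_cancel_right, abs_div, abs_of_pos hba, one_div_mul_eq_div]
  refine ⟨_, projIcc 0 1 zero_le_one ∘ _ ∘ height,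
    (hheight.lipschitz_comp hramp).lipschitz_comp (LipschitzWith.projIcc zero_le_one),
    fun y hy ↦ projIcc_of_right_le _ ?_, fun y hy ↦ projIcc_of_le_left _ ?_⟩
  · obtain ⟨j, hj, hb⟩ := hy
    refine (one_le_div hba).2 ?_
    have hle : W.bump j y ≤ height y := le_ciSup (f := fun j : {j // W.color j ∈ S} ↦ W.bump j y)
      ⟨1, by rintro _ ⟨i, rfl⟩; exact (W.bump_mem_Icc i y).2⟩ ⟨j, hj⟩
    linarith
  · refine div_nonpos_of_nonpos_of_nonneg (sub_nonpos.2 (Real.iSup_le (fun j ↦ ?_) ha)) hba.le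
    exact not_lt.1 fun h ↦ hy ⟨j, j.2, h⟩

open Classical in
/-- Modifies `f` on the pieces of colour `c`: on the piece `j` the point `f y` is moved along the
homotopy `H j` to the time `s y`. -/
noncomputable def glue (c : κ) (H : J → I → Z → Z) (s : Y → I) (f : Y → Z) (y : Y) : Z :=
  if h : ∃ j, W.color j = c ∧ 0 < W.bump j y then H h.choose (s y) (f y) else f y

variable {W} {c : κ} {H : J → I → Z → Z} {s : Y → I} {f : Y → Z} {j : J} {y y' : Y}

lemma region_anti {S : Set κ} {a b : ℝ} (hab : a ≤ b) : W.region S b ⊆ W.region S a :=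
  fun _ ⟨j, hj, hb⟩ ↦ ⟨j, hj, hab.trans_lt hb⟩

lemma mem_region_of_not_exists {S : Set κ} {b : ℝ} (hb : 0 ≤ b)
    (h : ¬∃ j, W.color j = c ∧ 0 < W.bump j y) (hy : y ∈ W.region (insert c S) b) :
    y ∈ W.region S b := by
  obtain ⟨j, hj, hbj⟩ := hy
  exact ⟨j, hj.resolve_left fun hjc ↦ h ⟨j, hjc, hb.trans_lt hbj⟩, hbj⟩

lemma radius_mul_dist_le {K : ℝ≥0} (hδ : LipschitzWith 1 δ) (hs : ScaledLipschitz δ K s)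
    (hy : 0 < W.bump j y) (hnear : Near δ (1 / 10) y y') :
    W.radius j * dist (s y) (s y') ≤ 3 * K * dist y y' := by
  have hr := W.radius_pos j
  have hle := W.radius_le hy
  have h := hs.dist_mul_le (ρ := W.radius j / 3) (y := y) (y' := y') (by linarith)
    (by linarith [hnear.symm.apply_le hδ])
  linarith

lemma glue_of_not_exists (h : ¬∃ j, W.color j = c ∧ 0 < W.bump j y) :
    W.glue c H s f y = f y := dif_neg h

lemma glue_eq_of_bump_pos (hj : W.color j = c) (hy : 0 < W.bump j y) :
    W.glue c H s f y = H j (s y) (f y) := by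
  have h : ∃ j, W.color j = c ∧ 0 < W.bump j y := ⟨j, hj, hy⟩
  have hδ : 0 < δ y := by linarith [W.radius_pos j, W.radius_le hy]
  have hchoose : h.choose = j := W.eq_of_near (h.choose_spec.1.trans hj.symm) h.choose_spec.2 hy
    (by simpa [Near] using hδ)
  rw [glue, dif_pos h, hchoose]

lemma glue_eq_of_near {S : Set κ} {b : ℝ} (hS : ∀ y ∈ W.region S b, s y = 1)
    (hb : 0 ≤ b) (hj : W.color j = c) (hy : 0 < W.bump j y)
    (hnear : Near δ (1 / 10) y y')
    (hy' : y' ∈ W.region (insert c S) b) (hone : H j 1 (f y') = f y') :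
    W.glue c H s f y' = H j (s y') (f y') := by
  by_cases h : ∃ i, W.color i = c ∧ 0 < W.bump i y'
  · obtain ⟨i, hi, hpos⟩ := h
    rw [W.eq_of_near (hj.trans hi.symm) hy hpos hnear]
    exact glue_eq_of_bump_pos hi hpos
  · rw [glue_of_not_exists h, hS y' (mem_region_of_not_exists hb h hy'), hone]

end WhitneyCover

variable [PseudoMetricSpace Z]

/-- `H` is a homotopy from a map `H 0` that collapses `closedBall z r` to a point to a map `H 1`
that fixes this ball, Lipschitz with constants `C` in space and `C * r` in time. -/
structure IsLipschitzContraction (C : ℝ≥0) (z : Z) (r : ℝ) (H : I → Z → Z) : Prop where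
  one_apply : ∀ x ∈ closedBall z r, H 1 x = x
  zero_apply : ∀ x ∈ closedBall z r, ∀ x' ∈ closedBall z r, H 0 x = H 0 x'
  dist_le : ∀ t t', ∀ x ∈ closedBall z r, ∀ x' ∈ closedBall z r,
    dist (H t x) (H t' x') ≤ C * (dist x x' + r * dist t t')

/-- `X` admits uniformly Lipschitz contractions of its balls: every ball can be collapsed to a point
by a homotopy with Lipschitz constants `C` in space and `C` times the radius in time. -/
def HasLipschitzContractions (X : Type*) [PseudoMetricSpace X] : Prop :=
  ∃ C : ℝ≥0, ∀ (z : X) (r : ℝ), 0 < r → ∃ H, IsLipschitzContraction C z r H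

lemma IsLipschitzContraction.dist_le_of_ne_zero {C : ℝ≥0} {z x x' : Z} {r D : ℝ} {H : I → Z → Z}
    {t t' : I} (hH : IsLipschitzContraction C z r H) (hx : x ∈ closedBall z r)
    (hx' : x' ∈ closedBall z r) (hD : 0 ≤ D) (h : t ≠ 0 → t' ≠ 0 → dist x x' ≤ D) :
    dist (H t x) (H t' x') ≤ C * (D + r * dist t t') := by
  by_cases ht : t = 0
  · calc dist (H t x) (H t' x') = dist (H t x') (H t' x') := by
          rw [ht, hH.zero_apply x hx x' hx']
      _ ≤ C * (0 + r * dist t t') := by simpa using hH.dist_le t t' x' hx' x' hx'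
      _ ≤ C * (D + r * dist t t') := by gcongr
  by_cases ht' : t' = 0
  · calc dist (H t x) (H t' x') = dist (H t x) (H t' x) := by
          rw [ht', hH.zero_apply x hx x' hx']
      _ ≤ C * (0 + r * dist t t') := by simpa using hH.dist_le t t' x hx x hx
      _ ≤ C * (D + r * dist t t') := by gcongr
  exact (hH.dist_le t t' x hx x' hx').trans (by gcongr; exact h ht ht')

/-- `f` is a candidate for a Lipschitz retraction onto the range of `ι` as far as points of `V` are
concerned: it moves points by at most a multiple of `δ`, and it is Lipschitz for pairs of points of
`V` that are near each other. -/
structure IsNearRetractionOn (ι : Z → Y) (δ : Y → ℝ) (V : Set Y) (f : Y → Z) : Prop where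
  exists_dist_le : ∃ A : ℝ≥0, ∀ y, dist (ι (f y)) y ≤ A * δ y
  exists_dist_le_of_near : ∃ η > 0, ∃ L : ℝ≥0, ∀ y ∈ V, ∀ y' ∈ V, Near δ η y y' →
    dist (f y) (f y') ≤ L * dist y y'

namespace WhitneyCover

variable {W : WhitneyCover ι δ J κ} {c : κ} {H : J → I → Z → Z} {s : Y → I} {f : Y → Z} {j : J}
  {y y' : Y} {C A B K L : ℝ≥0} {S : Set κ} {a b η : ℝ}

lemma mem_closedBall_of_near (hι : Isometry ι) (hδ : LipschitzWith 1 δ)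
    (hf : ∀ y, dist (ι (f y)) y ≤ A * δ y) (hy : 0 < W.bump j y) (hnear : Near δ (1 / 10) y y') :
    f y' ∈ closedBall (W.center j) ((4 * A + 7 : ℝ≥0) * W.radius j) := by
  have hr := W.radius_pos j
  have hδy' : δ y' ≤ 4 * W.radius j := by linarith [hnear.apply_le hδ, W.le_radius hy]
  calc dist (f y') (W.center j) = dist (ι (f y')) (ι (W.center j)) := (hι.dist_eq ..).symm
    _ ≤ dist (ι (f y')) y' + dist y' y + dist y (ι (W.center j)) := dist_triangle4 ..
    _ ≤ A * (4 * W.radius j) + W.radius j + 6 * W.radius j := by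
        gcongr
        · exact (hf y').trans (by gcongr)
        · linarith [dist_comm y y', hnear.1, W.le_radius hy]
        · exact W.dist_center_le hy
    _ = (4 * A + 7 : ℝ≥0) * W.radius j := by push_cast; ring

lemma dist_glue_le (hι : Isometry ι) (hδ : LipschitzWith 1 δ) (hδ₀ : ∀ y, 0 ≤ δ y)
    (hf : ∀ y, dist (ι (f y)) y ≤ A * δ y)
    (hH : ∀ j, IsLipschitzContraction C (W.center j) ((4 * A + 7 : ℝ≥0) * W.radius j) (H j)) :
    dist (ι (W.glue c H s f y)) y ≤ (2 * C * (4 * A + 7) + A : ℝ≥0) * δ y := by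
  have hdist : dist (W.glue c H s f y) (f y) ≤ 2 * C * (4 * A + 7) * δ y := by
    by_cases h : ∃ j, W.color j = c ∧ 0 < W.bump j y
    · obtain ⟨j, hj, hy⟩ := h
      have hr := W.radius_pos j
      have hle := W.radius_le hy
      have hnear : Near δ (1 / 10) y y := by
        have : 0 < δ y := by linarith
        simpa [Near] using this
      have hball := mem_closedBall_of_near hι hδ hf hy hnear
      have hone := (hH j).one_apply _ hball
      rw [glue_eq_of_bump_pos hj hy]
      calc dist (H j (s y) (f y)) (f y) = dist (H j (s y) (f y)) (H j 1 (f y)) := by rw [hone]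
        _ ≤ C * ((4 * A + 7 : ℝ≥0) * W.radius j * dist (s y) 1) := by
            simpa using (hH j).dist_le (s y) 1 _ hball _ hball
        _ ≤ C * ((4 * A + 7 : ℝ≥0) * (2 * δ y) * 1) := by
            have := hδ₀ y
            gcongr
            exact Real.dist_le_of_mem_Icc_01 (s y).2 unitInterval.one_mem
        _ = 2 * C * (4 * A + 7) * δ y := by push_cast; ring
    · have := hδ₀ y
      rw [glue_of_not_exists h, dist_self]
      positivity
  calc dist (ι (W.glue c H s f y)) y
      ≤ dist (ι (W.glue c H s f y)) (ι (f y)) + dist (ι (f y)) y := dist_triangle ..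
    _ ≤ 2 * C * (4 * A + 7) * δ y + A * δ y := by rw [hι.dist_eq]; exact add_le_add hdist (hf y)
    _ = _ := by push_cast; ring

lemma dist_glue_glue_le (hι : Isometry ι) (hδ : LipschitzWith 1 δ) (hs : ScaledLipschitz δ K s)
    (hone : ∀ y ∈ W.region S b, s y = 1) (hzero : ∀ y ∉ W.region S a, s y = 0) (hb : 0 ≤ b)
    (hf : ∀ y, dist (ι (f y)) y ≤ A * δ y)
    (hfL : ∀ y ∈ W.region S a, ∀ y' ∈ W.region S a, Near δ η y y' →
      dist (f y) (f y') ≤ L * dist y y')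
    (hH : ∀ j, IsLipschitzContraction C (W.center j) ((4 * A + 7 : ℝ≥0) * W.radius j) (H j))
    (hj : W.color j = c) (hpos : 0 < W.bump j y) (hy : y ∈ W.region (insert c S) b)
    (hy' : y' ∈ W.region (insert c S) b) (hnear : Near δ (1 / 10) y y') (hη : Near δ η y y') :
    dist (W.glue c H s f y) (W.glue c H s f y') ≤
      (C * (L + (4 * A + 7) * (3 * K)) : ℝ≥0) * dist y y' := by
  have hball := mem_closedBall_of_near hι hδ hf hpos hnear.refl_left
  have hball' := mem_closedBall_of_near hι hδ hf hpos hnear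
  rw [glue_eq_of_near hone hb hj hpos hnear.refl_left hy ((hH j).one_apply _ hball),
    glue_eq_of_near hone hb hj hpos hnear hy' ((hH j).one_apply _ hball')]
  calc dist (H j (s y) (f y)) (H j (s y') (f y'))
      ≤ C * (L * dist y y' + (4 * A + 7 : ℝ≥0) * W.radius j * dist (s y) (s y')) :=
        (hH j).dist_le_of_ne_zero hball hball' (by positivity) fun ht ht' ↦
          hfL y (not_imp_comm.1 (hzero y) ht) y' (not_imp_comm.1 (hzero y') ht') hη
    _ ≤ C * (L * dist y y' + (4 * A + 7 : ℝ≥0) * (3 * K * dist y y')) := by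
        rw [mul_assoc (_ : ℝ) (W.radius j)]
        have := radius_mul_dist_le hδ hs hpos hnear
        gcongr _ * (_ + _ * ?_)
    _ = _ := by push_cast; ring

end WhitneyCover

lemma IsNearRetractionOn.exists_insert {W : WhitneyCover ι δ J κ} {S : Set κ} {a b : ℝ}
    {f : Y → Z} (hf : IsNearRetractionOn ι δ (W.region S a) f) (hι : Isometry ι)
    (hδ : LipschitzWith 1 δ) (hδ₀ : ∀ y, 0 ≤ δ y) (hZ : HasLipschitzContractions Z) (ha : 0 ≤ a)
    (hab : a < b) (c : κ) :
    ∃ g : Y → Z, IsNearRetractionOn ι δ (W.region (insert c S) b) g := by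
  obtain ⟨C, hC⟩ := hZ
  obtain ⟨A, hA⟩ := hf.exists_dist_le
  obtain ⟨η, hη, L, hL⟩ := hf.exists_dist_le_of_near
  obtain ⟨K, s, hs, hone, hzero⟩ := W.exists_cutoff S ha hab
  choose H hH using fun j ↦ hC (W.center j) ((4 * A + 7 : ℝ≥0) * W.radius j)
    (mul_pos (by positivity) (W.radius_pos j))
  refine ⟨W.glue c H s f, ⟨_, fun _ ↦ WhitneyCover.dist_glue_le hι hδ hδ₀ hA hH⟩,
    ⟨min η (1 / 10), by positivity, L + C * (L + (4 * A + 7) * (3 * K)), fun y hy y' hy' h ↦ ?_⟩⟩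
  have hb := ha.trans hab.le
  have hglue {y y'} (hy : y ∈ W.region (insert c S) b) (hy' : y' ∈ W.region (insert c S) b)
      (h : Near δ (min η (1 / 10)) y y') (hj : ∃ j, W.color j = c ∧ 0 < W.bump j y) :
      dist (W.glue c H s f y) (W.glue c H s f y') ≤
        (L + C * (L + (4 * A + 7) * (3 * K)) : ℝ≥0) * dist y y' := by
    obtain ⟨j, hjc, hpos⟩ := hj
    refine (WhitneyCover.dist_glue_glue_le hι hδ hs hone hzero hb hA hL hH hjc hpos hy hy'
      (h.mono (min_le_right ..) hδ₀) (h.mono (min_le_left ..) hδ₀)).trans ?_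
    gcongr
    exact le_add_self
  by_cases hj : ∃ j, W.color j = c ∧ 0 < W.bump j y
  · exact hglue hy hy' h hj
  by_cases hj' : ∃ j, W.color j = c ∧ 0 < W.bump j y'
  · rw [dist_comm, dist_comm y]
    exact hglue hy' hy h.symm hj'
  have hmem {y} (hj : ¬∃ j, W.color j = c ∧ 0 < W.bump j y) (hy : y ∈ W.region (insert c S) b) :
      y ∈ W.region S a :=
    WhitneyCover.region_anti hab.le (WhitneyCover.mem_region_of_not_exists hb hj hy)
  rw [WhitneyCover.glue_of_not_exists hj, WhitneyCover.glue_of_not_exists hj']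
  refine (hL y (hmem hj hy) y' (hmem hj' hy') (h.mono (min_le_left ..) hδ₀)).trans ?_
  gcongr
  exact le_self_add

lemma WhitneyCover.exists_isNearRetractionOn [Finite κ] (W : WhitneyCover ι δ J κ)
    (hι : Isometry ι) (hδ : LipschitzWith 1 δ) (hδ₀ : ∀ y, 0 ≤ δ y)
    (hnearest : ∀ y, ∃ z, dist (ι z) y ≤ 2 * δ y)
    (hZ : HasLipschitzContractions Z) : ∃ f : Y → Z, IsNearRetractionOn ι δ {y | 0 < δ y} f := by
  classical
  cases nonempty_fintype κ
  -- The level `a` grows with each colour to leave room for the cutoff, but stays below the value 1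
  -- that some bump function takes at each point.
  have hregion (S : Finset κ) : ∃ a : ℝ, 0 ≤ a ∧ a < 1 ∧
      ∃ f : Y → Z, IsNearRetractionOn ι δ (W.region S a) f := by
    induction S using Finset.induction_on with
    | empty =>
      choose f hf using hnearest
      refine ⟨0, le_rfl, one_pos, f, ⟨2, hf⟩, 1, one_pos, 0, ?_⟩
      rintro y ⟨j, hj, -⟩
      simp at hj
    | insert c S _ ih =>
      obtain ⟨a, ha, ha1, f, hf⟩ := ih
      rw [Finset.coe_insert]
      exact ⟨(a + 1) / 2, by linarith, by linarith,
        hf.exists_insert hι hδ hδ₀ hZ ha (by linarith) c⟩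
  obtain ⟨a, -, ha, f, hA, η, hη, L, hL⟩ := hregion Finset.univ
  have hmem {y} (hy : 0 < δ y) : y ∈ W.region (Finset.univ : Finset κ) a := by
    obtain ⟨j, hj⟩ := W.exists_bump_eq_one hy
    exact ⟨j, Finset.mem_coe.2 (Finset.mem_univ _), hj.symm ▸ ha⟩
  exact ⟨f, hA, η, hη, L, fun y hy y' hy' ↦ hL y (hmem hy) y' (hmem hy')⟩

lemma IsNearRetractionOn.exists_lipschitzWith {f : Y → Z}
    (hf : IsNearRetractionOn ι δ {y | 0 < δ y} f) (hι : Isometry ι) (hδ : LipschitzWith 1 δ) :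
    ∃ L : ℝ≥0, LipschitzWith L f := by
  obtain ⟨⟨A, hA⟩, η, hη, L, hL⟩ := hf
  lift η to ℝ≥0 using hη.le
  have hη' : (0 : ℝ) < η := hη
  have hfar {y y'} (h : η * δ y ≤ dist y y') :
      dist (f y) (f y') ≤ (A * (2 / η + 1) + 1 : ℝ≥0) * dist y y' := by
    have hδy : δ y ≤ dist y y' / η := (le_div_iff₀' hη').2 h
    have hδy' : δ y' ≤ dist y y' / η + dist y y' := by
      have := hδ.le_add_mul y' y
      rw [NNReal.coe_one, one_mul, dist_comm] at this
      linarith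
    calc dist (f y) (f y') = dist (ι (f y)) (ι (f y')) := (hι.dist_eq ..).symm
      _ ≤ dist (ι (f y)) y + dist y y' + dist y' (ι (f y')) := dist_triangle4 ..
      _ ≤ A * (dist y y' / η) + dist y y' + A * (dist y y' / η + dist y y') := by
          rw [dist_comm y' (ι _)]
          gcongr
          exacts [(hA y).trans (by gcongr), (hA y').trans (by gcongr)]
      _ = _ := by push_cast; ring
  have hpos {y y'} (h : dist y y' < η * δ y) : 0 < δ y :=
    pos_of_mul_pos_right (dist_nonneg.trans_lt h) hη'.le
  refine ⟨max L (A * (2 / η + 1) + 1), LipschitzWith.of_dist_le_mul fun y y' ↦ ?_⟩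
  by_cases hy : dist y y' < η * δ y
  · by_cases hy' : dist y' y < η * δ y'
    · refine (hL y (hpos hy) y' (hpos hy') ⟨hy, dist_comm y y' ▸ hy'⟩).trans ?_
      gcongr
      exact le_max_left ..
    · rw [dist_comm, dist_comm y]
      refine (hfar (not_lt.1 hy')).trans ?_
      gcongr
      exact le_max_right ..
  · refine (hfar (not_lt.1 hy)).trans ?_
    gcongr
    exact le_max_right ..

end WhitneyCover

lemma exists_dist_le_two_mul_infDist_range {Z Y : Type*} [MetricSpace Z] [CompleteSpace Z]
    [Nonempty Z] [MetricSpace Y] {ι : Z → Y} (hι : Isometry ι) (y : Y) :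
    ∃ z, dist (ι z) y ≤ 2 * infDist y (range ι) := by
  rcases (infDist_nonneg (x := y) (s := range ι)).eq_or_lt with h | h
  · obtain ⟨z, rfl⟩ := (hι.isClosedEmbedding.isClosed_range.mem_iff_infDist_zero
      (range_nonempty ι)).2 h.symm
    exact ⟨z, by simp [← h]⟩
  · obtain ⟨_, ⟨z, rfl⟩, hz⟩ := (infDist_lt_iff (range_nonempty ι)).1 (lt_two_mul_self h)
    exact ⟨z, dist_comm y (ι z) ▸ hz.le⟩

theorem exists_lipschitzWith_leftInverse_of_isDoubling {Z Y : Type*} [MetricSpace Z]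
    [CompleteSpace Z] [Nonempty Z] [MetricSpace Y] {ι : Z → Y} (hι : Isometry ι)
    (hZ : IsDoubling Z) (hC : HasLipschitzContractions Z) :
    ∃ (L : ℝ≥0) (r : Y → Z), LipschitzWith L r ∧ Function.LeftInverse r ι := by
  have hδ : LipschitzWith 1 fun y ↦ infDist y (range ι) := lipschitz_infDist_pt _
  have hδ₀ (y : Y) : 0 ≤ infDist y (range ι) := infDist_nonneg
  have hnearest := exists_dist_le_two_mul_infDist_range hι
  obtain ⟨J, m, ⟨W⟩⟩ := hZ.exists_whitneyCover hι hδ hnearest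
  obtain ⟨r, hr⟩ := W.exists_isNearRetractionOn hι hδ hδ₀ hnearest hC
  obtain ⟨L, hL⟩ := hr.exists_lipschitzWith hι hδ
  obtain ⟨A, hA⟩ := hr.exists_dist_le
  refine ⟨L, r, hL, fun z ↦ hι.injective (dist_le_zero.1 ?_)⟩
  simpa [infDist_zero_of_mem (mem_range_self z)] using hA (ι z)

/-! ### The space of nonempty subsets with at most `n` elements -/

lemma encard_le_of_forall_exists_dist_lt {E : Type*} [MetricSpace E] {K : Set E} {n : ℕ}
    (h : ∀ ε > 0, ∃ S : Set E, S.encard ≤ n ∧ ∀ x ∈ K, ∃ y ∈ S, dist x y < ε) :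
    K.encard ≤ n := by
  by_contra! hK
  obtain ⟨t, htK, ht⟩ := exists_subset_encard_eq (Order.add_one_le_of_lt hK)
  have hfin : t.Finite := finite_of_encard_eq_coe (k := n + 1) (by exact_mod_cast ht)
  obtain ⟨C, hC, hCt⟩ := ENNReal.lt_iff_exists_nnreal_btwn.1 hfin.einfsep_pos
  obtain ⟨S, hS, hKS⟩ := h (C / 2) (half_pos (by exact_mod_cast hC))
  choose! f hfS hf using hKS
  have hcard : S.encard < t.encard :=
    hS.trans_lt (ht ▸ by exact_mod_cast n.lt_succ_self)
  obtain ⟨x, hx, y, hy, hne, hxy⟩ :=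
    exists_ne_map_eq_of_encard_lt_of_maps_to hcard fun x hx ↦ hfS x (htK hx)
  have hlt : dist x y < C := by
    have := dist_triangle_right x y (f x)
    have hfx := hf x (htK hx)
    have hfy := hf y (htK hy)
    rw [← hxy] at hfy
    linarith
  exact (hCt.trans_le (einfsep_le_edist_of_mem hx hy hne)).not_gt (edist_lt_coe.2 hlt)

/-- The metric space `E(n)` of nonempty subsets of `E` with at most `n` elements. -/
def FiniteSubsets (E : Type*) (n : ℕ) : Type _ :=
  {S : Set E // S.Nonempty ∧ S.Finite ∧ S.ncard ≤ n}

namespace FiniteSubsets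

variable {E F : Type*} [MetricSpace E] [MetricSpace F] {n : ℕ}

/-- A nonempty finite set is a nonempty compact set; this embeds `E(n)` into a space of which
Mathlib knows the Hausdorff metric. -/
def toNonemptyCompacts (S : FiniteSubsets E n) : TopologicalSpace.NonemptyCompacts E :=
  ⟨⟨S.1, S.2.2.1.isCompact⟩, S.2.1⟩

lemma toNonemptyCompacts_injective :
    Function.Injective (toNonemptyCompacts : FiniteSubsets E n → _) := fun _ _ h ↦
  Subtype.ext (congrArg (fun K : TopologicalSpace.NonemptyCompacts E ↦ (K : Set E)) h)

noncomputable instance : MetricSpace (FiniteSubsets E n) :=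
  .induced toNonemptyCompacts toNonemptyCompacts_injective inferInstance

lemma isometry_toNonemptyCompacts : Isometry (toNonemptyCompacts : FiniteSubsets E n → _) :=
  fun _ _ ↦ rfl

lemma dist_eq (S T : FiniteSubsets E n) : dist S T = hausdorffDist S.1 T.1 := rfl

lemma exists_dist_le (S T : FiniteSubsets E n) {x : E} (hx : x ∈ S.1) :
    ∃ y ∈ T.1, dist x y ≤ dist S T := by
  obtain ⟨y, hy, hxy⟩ := T.2.2.1.isCompact.exists_infDist_eq_dist T.2.1 x
  exact ⟨y, hy, hxy ▸ infDist_le_hausdorffDist_of_mem hx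
    (hausdorffEDist_ne_top_of_nonempty_of_bounded S.2.1 T.2.1 S.2.2.1.isBounded T.2.2.1.isBounded)⟩

/-- The map `E(n) → F(n)` induced by a map `E → F`. -/
def map (f : E → F) (S : FiniteSubsets E n) : FiniteSubsets F n :=
  ⟨f '' S.1, S.2.1.image f, S.2.2.1.image f, (ncard_image_le S.2.2.1).trans S.2.2.2⟩

lemma dist_map_le {f g : E → F} {S T : FiniteSubsets E n} {D : ℝ} (hD : 0 ≤ D)
    (h : ∀ x ∈ S.1, ∀ y ∈ T.1, dist x y ≤ dist S T → dist (f x) (g y) ≤ D) :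
    dist (map f S) (map g T) ≤ D := by
  refine hausdorffDist_le_of_mem_dist hD (forall_mem_image.2 fun x hx ↦ ?_)
    (forall_mem_image.2 fun y hy ↦ ?_)
  · obtain ⟨y, hy, hxy⟩ := S.exists_dist_le T hx
    exact ⟨g y, mem_image_of_mem g hy, h x hx y hy hxy⟩
  · obtain ⟨x, hx, hxy⟩ := T.exists_dist_le S hy
    rw [dist_comm, dist_comm T] at hxy
    exact ⟨f x, mem_image_of_mem f hx, dist_comm (f x) (g y) ▸ h x hx y hy hxy⟩

lemma nonempty_of_one_le {E : Type*} [Nonempty E] {n : ℕ} (hn : 1 ≤ n) :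
    Nonempty (FiniteSubsets E n) := by
  obtain ⟨x⟩ := ‹Nonempty E›
  exact ⟨{x}, singleton_nonempty x, finite_singleton x, by rwa [ncard_singleton]⟩

lemma range_toNonemptyCompacts : range (toNonemptyCompacts : FiniteSubsets E n → _) =
    {K : TopologicalSpace.NonemptyCompacts E | (K : Set E).encard ≤ n} := by
  ext K
  constructor
  · rintro ⟨S, rfl⟩
    exact S.2.2.1.cast_ncard_eq.symm.trans_le (Nat.cast_le.2 S.2.2.2)
  · intro hK
    have hfin : (K : Set E).Finite := finite_of_encard_le_coe hK
    exact ⟨⟨K, K.nonempty, hfin, Nat.cast_le.1 (hfin.cast_ncard_eq.trans_le hK)⟩, rfl⟩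

lemma isClosed_range_toNonemptyCompacts :
    IsClosed (range (toNonemptyCompacts : FiniteSubsets E n → _)) := by
  refine isClosed_of_closure_subset fun K hK ↦ ?_
  rw [range_toNonemptyCompacts] at hK ⊢
  refine encard_le_of_forall_exists_dist_lt fun ε hε ↦ ?_
  obtain ⟨L, hL, hKL⟩ := mem_closure_iff.1 hK ε hε
  exact ⟨L, hL, fun x hx ↦ exists_dist_lt_of_hausdorffDist_lt hx hKL
    (hausdorffEDist_ne_top_of_nonempty_of_bounded K.nonempty L.nonempty K.isCompact.isBounded
      L.isCompact.isBounded)⟩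

instance [CompleteSpace E] : CompleteSpace (FiniteSubsets E n) :=
  (completeSpace_iff_isComplete_range isometry_toNonemptyCompacts.isUniformInducing).2
    isClosed_range_toNonemptyCompacts.isComplete

lemma dist_map_self_le {f : E → E} {S : FiniteSubsets E n} {D : ℝ}
    (h : ∀ x ∈ S.1, dist x (f x) ≤ D) : dist S (map f S) ≤ D := by
  obtain ⟨x, hx⟩ := S.2.1
  exact hausdorffDist_le_of_mem_dist (dist_nonneg.trans (h x hx))
    (fun x hx ↦ ⟨f x, mem_image_of_mem f hx, h x hx⟩)
    (forall_mem_image.2 fun x hx ↦ ⟨x, hx, dist_comm x (f x) ▸ h x hx⟩)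

lemma exists_finset_card_le {E : Type*} (n : ℕ) (t : Finset E) : ∃ 𝒰 : Finset (FiniteSubsets E n),
    𝒰.card ≤ 2 ^ t.card ∧ ∀ U : FiniteSubsets E n, U.1 ⊆ t → U ∈ 𝒰 := by
  have hinj : Function.Injective fun U : FiniteSubsets E n ↦ U.2.2.1.toFinset :=
    fun _ _ h ↦ Subtype.ext (Finite.toFinset_inj.1 h)
  refine ⟨t.powerset.preimage _ hinj.injOn, ?_, fun U hU ↦ ?_⟩
  · rw [← Finset.card_powerset]
    exact Finset.card_le_card_of_injOn _ (fun U hU ↦ Finset.mem_preimage.1 hU) hinj.injOn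
  · rwa [Finset.mem_preimage, Finset.mem_powerset, Finite.toFinset_subset]

lemma isDoubling (hE : IsDoubling E) (n : ℕ) : IsDoubling (FiniteSubsets E n) := by
  classical
  intro R
  obtain ⟨N, hN⟩ := hE R
  refine ⟨2 ^ (n * N), fun S r hr ↦ ?_⟩
  choose t ht hcov using fun x ↦ hN x r hr
  let u : Finset E := S.2.2.1.toFinset.biUnion t
  have hu : u.card ≤ n * N := by
    refine (Finset.card_biUnion_le_card_mul _ _ N fun x _ ↦ ht x).trans ?_
    rw [← ncard_eq_toFinset_card _ S.2.2.1]
    exact Nat.mul_le_mul_right N S.2.2.2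
  obtain ⟨𝒰, hcard, h𝒰⟩ := exists_finset_card_le n u
  refine ⟨𝒰, hcard.trans (Nat.pow_le_pow_right two_pos hu), fun T hT ↦ ?_⟩
  have exists_near : ∀ y ∈ T.1, ∃ z ∈ u, dist y z ≤ r := by
    intro y hy
    obtain ⟨x, hx, hyx⟩ := T.exists_dist_le S hy
    obtain ⟨z, hz, hyz⟩ := hcov x (mem_closedBall.2 (hyx.trans hT))
    exact ⟨z, Finset.mem_biUnion.2 ⟨x, S.2.2.1.mem_toFinset.2 hx, hz⟩, edist_le_coe.1 hyz⟩
  choose! c hcu hc using exists_near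
  exact ⟨map c T, h𝒰 _ (image_subset_iff.2 hcu), edist_le_coe.2 (dist_map_self_le hc)⟩

end FiniteSubsets

lemma dist_le_mul_length {V : Type*} [PseudoMetricSpace V] {G : SimpleGraph V} {ε : ℝ}
    (hG : ∀ v w, G.Adj v w → dist v w ≤ ε) {v w : V} (p : G.Walk v w) :
    dist v w ≤ ε * p.length := by
  induction p with
  | nil => simp
  | @cons u v w h p ih =>
    rw [SimpleGraph.Walk.length_cons]
    push_cast
    linarith [dist_triangle u v w, hG u v h]

lemma exists_clustering (V : Type*) [Fintype V] [PseudoMetricSpace V] {ε : ℝ} (hε : 0 ≤ ε) :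
    ∃ g : V → V, (∀ v, dist v (g v) ≤ ε * Fintype.card V) ∧
      ∀ v w, dist v w ≤ ε → g v = g w := by
  classical
  let G : SimpleGraph V := .fromRel fun v w ↦ dist v w ≤ ε
  have hG (v w : V) (h : G.Adj v w) : dist v w ≤ ε := by
    rcases h with ⟨-, h | h⟩
    exacts [h, dist_comm v w ▸ h]
  refine ⟨fun v ↦ (G.connectedComponentMk v).out, fun v ↦ ?_, fun v w h ↦ ?_⟩
  · obtain ⟨p, hp⟩ := (SimpleGraph.ConnectedComponent.exact
      (Quot.out_eq (G.connectedComponentMk v)).symm).exists_isPath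
    refine (dist_le_mul_length hG p).trans ?_
    gcongr
    exact hp.length_lt.le
  · by_cases hvw : v = w
    · rw [hvw]
    · have hadj : G.Adj v w := ⟨hvw, .inl h⟩
      simp only [SimpleGraph.ConnectedComponent.sound hadj.reachable]

lemma exists_collapse {E : Type*} [PseudoMetricSpace E] {s : Set E} {n : ℕ} {r : ℝ}
    (hs : s.Finite) (hn : s.ncard ≤ n) (hr : 0 ≤ r) :
    ∃ q : E → E, (∀ x ∈ s, ∀ y, dist y x ≤ r → dist y (q y) ≤ (3 * n + 1 : ℝ≥0) * r) ∧
      ∀ x ∈ s, ∀ y, dist y x ≤ r → ∀ x' ∈ s, ∀ y', dist y' x' ≤ r → dist y y' ≤ r →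
        q y = q y' := by
  classical
  have := hs.fintype
  obtain ⟨g, hg, hgg⟩ := exists_clustering s (mul_nonneg zero_le_three hr)
  let q (y : E) : E := if h : ∃ x : s, dist y x ≤ r then g h.choose else y
  have q_spec {x y} (hx : x ∈ s) (hy : dist y x ≤ r) :
      ∃ v : s, dist y v ≤ r ∧ q y = g v := by
    have h : ∃ x : s, dist y x ≤ r := ⟨⟨x, hx⟩, hy⟩
    exact ⟨h.choose, h.choose_spec, dif_pos h⟩
  refine ⟨q, fun x hx y hy ↦ ?_, fun x hx y hy x' hx' y' hy' hyy' ↦ ?_⟩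
  · obtain ⟨v, hyv, hq⟩ := q_spec hx hy
    have hcard : (Fintype.card s : ℝ) ≤ n := by
      rw [← Nat.card_eq_fintype_card]
      exact_mod_cast hn
    calc dist y (q y) ≤ dist y v + dist v (g v) := hq ▸ dist_triangle ..
      _ ≤ r + 3 * r * n := by
          gcongr
          exact (hg v).trans (by gcongr)
      _ = _ := by push_cast; ring
  · obtain ⟨v, hyv, hq⟩ := q_spec hx hy
    obtain ⟨v', hyv', hq'⟩ := q_spec hx' hy'
    have hvv' : dist v v' ≤ 3 * r := by
      have := dist_triangle4 (v : E) y y' v'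
      rw [dist_comm (v : E) y] at this
      exact (Subtype.dist_eq v v').trans_le (by linarith)
    rw [hq, hq', hgg v v' hvv']

section NormedSpace

variable {E : Type*} [NormedAddCommGroup E] [NormedSpace ℝ E]

lemma isDoubling_of_properSpace [ProperSpace E] : IsDoubling E := by
  classical
  intro R
  obtain ⟨t, -, ht, hcov⟩ :=
    exists_finite_isCover_of_isCompact one_ne_zero (isCompact_closedBall (0 : E) R)
  lift t to Finset E using ht
  refine ⟨t.card, fun x r hr ↦ ⟨t.image fun v ↦ x + r • v, Finset.card_image_le, fun y hy ↦ ?_⟩⟩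
  have hr' : (0 : ℝ) < r := hr
  have hball : (r : ℝ)⁻¹ • (y - x) ∈ closedBall (0 : E) R := by
    rw [mem_closedBall_zero_iff, norm_smul, norm_inv, NNReal.norm_eq, inv_mul_le_iff₀ hr',
      ← dist_eq_norm, mul_comm]
    exact hy
  obtain ⟨v, hv, hdist⟩ := hcov hball
  refine ⟨x + r • v, Finset.mem_coe.2 (Finset.mem_image_of_mem _ hv), edist_le_coe.2 ?_⟩
  have hsub : y - (x + r • v) = (r : ℝ) • ((r : ℝ)⁻¹ • (y - x) - v) := by
    rw [smul_sub, smul_inv_smul₀ hr'.ne', NNReal.smul_def, sub_sub]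
  have hle : dist ((r : ℝ)⁻¹ • (y - x)) v ≤ 1 := by exact_mod_cast edist_le_coe.1 hdist
  change dist _ _ ≤ (r : ℝ)
  rw [dist_eq_norm, hsub, norm_smul, NNReal.norm_eq, ← dist_eq_norm]
  exact mul_le_of_le_one_right hr'.le hle

lemma dist_lineMap_lineMap_le {y y' p p' : E} {r : ℝ} {M : ℝ≥0} (hr : 0 ≤ r)
    (hp : dist y p ≤ M * r) (hp' : dist y' p' ≤ M * r) (hpp' : dist y y' ≤ r → p = p')
    (t t' : I) : dist (AffineMap.lineMap p y (t : ℝ)) (AffineMap.lineMap p' y' (t' : ℝ)) ≤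
      (2 * M + 1 : ℝ≥0) * (dist y y' + r * dist t t') := by
  push_cast
  by_cases h : dist y y' ≤ r
  · obtain rfl := hpp' h
    calc _ ≤ dist (AffineMap.lineMap p y (t : ℝ)) (AffineMap.lineMap p y' (t : ℝ)) +
          dist (AffineMap.lineMap p y' (t : ℝ)) (AffineMap.lineMap p y' (t' : ℝ)) :=
          dist_triangle ..
      _ = (t : ℝ) * dist y y' + dist t t' * dist y' p := by
          rw [dist_lineMap_lineMap, dist_comm p, AffineMap.lineMap_apply_module',
            AffineMap.lineMap_apply_module', dist_add_right, dist_smul₀, Real.norm_of_nonneg t.2.1,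
            dist_sub_right, Subtype.dist_eq]
      _ ≤ 1 * dist y y' + dist t t' * (M * r) := by
          gcongr
          exact t.2.2
      _ ≤ _ := by
          have h₁ : 0 ≤ M * dist y y' := by positivity
          have h₂ : 0 ≤ (M + 1) * (r * dist t t') := by positivity
          linarith
  · have hlineMap {y p : E} (hp : dist y p ≤ M * r) (t : I) :
        dist (AffineMap.lineMap p y (t : ℝ)) y ≤ M * r := by
      rw [dist_lineMap_right, dist_comm p]
      refine (mul_le_of_le_one_left dist_nonneg ?_).trans hp
      rw [Real.norm_of_nonneg (sub_nonneg.2 t.2.2)]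
      exact sub_le_self 1 t.2.1
    calc _ ≤ dist (AffineMap.lineMap p y (t : ℝ)) y + dist y y' +
          dist y' (AffineMap.lineMap p' y' (t' : ℝ)) := dist_triangle4 ..
      _ ≤ M * dist y y' + dist y y' + M * dist y y' := by
          rw [dist_comm y' (AffineMap.lineMap _ _ _)]
          have hle : M * r ≤ M * dist y y' := by gcongr; exact (not_le.1 h).le
          gcongr
          exacts [(hlineMap hp t).trans hle, (hlineMap hp' t').trans hle]
      _ = (2 * M + 1) * (dist y y' + 0) := by ring
      _ ≤ _ := by gcongr; positivity

namespace FiniteSubsets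

lemma hasLipschitzContractions (n : ℕ) : HasLipschitzContractions (FiniteSubsets E n) := by
  refine ⟨2 * (3 * n + 1) + 1, fun Z r hr ↦ ?_⟩
  obtain ⟨q, hq, hqq⟩ := exists_collapse Z.2.2.1 Z.2.2.2 hr.le
  have exists_near {S : FiniteSubsets E n} (hS : S ∈ closedBall Z r) {y : E} (hy : y ∈ S.1) :
      ∃ x ∈ Z.1, dist y x ≤ r := by
    obtain ⟨x, hx, hyx⟩ := S.exists_dist_le Z hy
    exact ⟨x, hx, hyx.trans hS⟩
  have map_eq {S : FiniteSubsets E n} (hS : S ∈ closedBall Z r) : map q S = map q Z := by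
    refine dist_le_zero.1 (dist_map_le le_rfl fun y _ x hx hyx ↦ (dist_eq_zero.2 ?_).le)
    exact hqq x hx y (hyx.trans hS) x hx x ((dist_self x).trans_le hr.le) (hyx.trans hS)
  refine ⟨fun t ↦ map fun y ↦ AffineMap.lineMap (q y) y (t : ℝ), ⟨fun S _ ↦ ?_,
    fun S hS T hT ↦ ?_, fun t t' S hS T hT ↦ dist_map_le (by positivity) fun y hy y' hy' hyy' ↦ ?_⟩⟩
  · exact Subtype.ext (by simp [map])
  · simpa using (map_eq hS).trans (map_eq hT).symm
  · obtain ⟨x, hx, hyx⟩ := exists_near hS hy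
    obtain ⟨x', hx', hyx'⟩ := exists_near hT hy'
    refine (dist_lineMap_lineMap_le hr.le (hq x hx y hyx) (hq x' hx' y' hyx')
      (hqq x hx y hyx x' hx' y' hyx') t t').trans ?_
    gcongr

end FiniteSubsets

theorem euclidean_finite_subsets_absolute_lipschitz_retract_general [FiniteDimensional ℝ E] {n : ℕ}
    (hn : 1 ≤ n) {Y : Type*} [MetricSpace Y] {ι : FiniteSubsets E n → Y} (hι : Isometry ι) :
    ∃ (L : ℝ≥0) (r : Y → FiniteSubsets E n), LipschitzWith L r ∧ Function.LeftInverse r ι := by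
  have : ProperSpace E := FiniteDimensional.proper ℝ E
  have : Nonempty (FiniteSubsets E n) := FiniteSubsets.nonempty_of_one_le hn
  exact exists_lipschitzWith_leftInverse_of_isDoubling hι
    (FiniteSubsets.isDoubling isDoubling_of_properSpace n)
    (FiniteSubsets.hasLipschitzContractions n)

end NormedSpace

/-- **Corollary 1.2.** For `d, n ≥ 1`, the space `ℝ^d(n)` of nonempty subsets of `ℝ^d` with
at most `n` elements, with the Hausdorff metric, is an absolute Lipschitz retract: for every
metric space `Y` and every isometric embedding `ι : ℝ^d(n) → Y`, there is a constant `L` and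
an `L`-Lipschitz map `r : Y → ℝ^d(n)` with `r ∘ ι = id`. -/
theorem euclidean_finite_subsets_absolute_lipschitz_retract
    (d n : ℕ) (hd : 1 ≤ d) (hn : 1 ≤ n)
    (Y : Type*) [MetricSpace Y]
    (ι : {S : Set (EuclideanSpace ℝ (Fin d)) // S.Nonempty ∧ S.Finite ∧ S.ncard ≤ n} → Y)
    (hι : ∀ S T, dist (ι S) (ι T) =
      Metric.hausdorffDist (S : Set (EuclideanSpace ℝ (Fin d))) (T : Set (EuclideanSpace ℝ (Fin d)))) :
    ∃ (L : ℝ) (r : Y → {S : Set (EuclideanSpace ℝ (Fin d)) // S.Nonempty ∧ S.Finite ∧ S.ncard ≤ n}),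
      (∀ y y' : Y,
        Metric.hausdorffDist (r y : Set (EuclideanSpace ℝ (Fin d))) (r y' : Set (EuclideanSpace ℝ (Fin d)))
          ≤ L * dist y y') ∧
      (∀ S, r (ι S) = S) := by
  obtain ⟨L, r, hL, hr⟩ := euclidean_finite_subsets_absolute_lipschitz_retract_general hn
    (ι := (ι : FiniteSubsets (EuclideanSpace ℝ (Fin d)) n → Y)) (.of_dist_eq hι)
  exact ⟨L, r, hL.dist_le_mul, hr⟩
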